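/- arXiv:2111.07701 — 2 statements merged into one kernel-verified Lean document; each statement's English description precedes it below -/
import Mathlib

section
/- Let n ≥ 1 and d ≥ 1 be integers and M > 0 a real number. Let φ : ℝⁿ → ℝ be continuous with 0 ≤ φ(x) ≤ C₀·(1 + ‖x‖₂^{d−1}) for some constant C₀ ≥ 0 and all x in the nonnegative orthant ℝⁿ₊, and let g₁, …, g_m : ℝⁿ → ℝ be continuous functions with |g_i(x)| ≤ C_i·(1 + ‖x‖₂^{d−1}) on ℝⁿ₊ for constants C_i ≥ 0, and let q₁, …, q_m ∈ ℝ. Let F be the set of Borel probability measures μ on ℝⁿ that are supported in ℝⁿ₊ and satisfy ∫ g_i dμ = q_i for all i ∈ {1,…,m} and ∫ ‖x‖₂^d dμ ≤ M. If F is nonempty, then sup { ∫ φ dμ : μ ∈ F } is finite and there exists μ* ∈ F with ∫ φ dμ* = sup { ∫ φ dμ : μ ∈ F }, i.e. the supremum is attained. -/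
open MeasureTheory


open Filter Topology
open scoped NNReal ENNReal BoundedContinuousFunction

namespace GMPAux

variable {E : Type*} [NormedAddCommGroup E] [ProperSpace E] [MeasurableSpace E] [BorelSpace E]

/-- Probability measures carried by `S` with bounded `d`-th moment. -/
def K0 (S : Set E) (d : ℕ) (M : ℝ) : Set (ProbabilityMeasure E) :=
  {μ | (μ : Measure E) Sᶜ = 0 ∧ ∫⁻ x, (‖x‖₊ ^ d : ℝ≥0) ∂(μ : Measure E) ≤ ENNReal.ofReal M}

lemma moment_iff (μ : Measure E) (d : ℕ) (M : ℝ) (hM : 0 ≤ M) :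
    (Integrable (fun x : E => ‖x‖ ^ d) μ ∧ ∫ x, ‖x‖ ^ d ∂μ ≤ M) ↔
      ∫⁻ x, (‖x‖₊ ^ d : ℝ≥0) ∂μ ≤ ENNReal.ofReal M := by
  have hmeas : AEStronglyMeasurable (fun x : E => ‖x‖ ^ d) μ :=
    (by fun_prop : Continuous fun x : E => ‖x‖ ^ d).aestronglyMeasurable
  have heq : ∫⁻ x, (‖x‖₊ ^ d : ℝ≥0) ∂μ = ∫⁻ x, ENNReal.ofReal (‖x‖ ^ d) ∂μ := by
    refine lintegral_congr fun x => ?_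
    rw [ENNReal.ofReal_pow (norm_nonneg _), ofReal_norm]
    simp [enorm]
  rw [heq]
  have hnn : 0 ≤ᵐ[μ] fun x : E => ‖x‖ ^ d := ae_of_all _ fun x => by positivity
  constructor
  · rintro ⟨hi, hle⟩
    rw [← ofReal_integral_eq_lintegral_ofReal hi hnn]
    exact ENNReal.ofReal_le_ofReal hle
  · intro h
    have hi : Integrable (fun x : E => ‖x‖ ^ d) μ := by
      refine ⟨hmeas, ?_⟩
      rw [hasFiniteIntegral_iff_ofReal hnn]
      exact h.trans_lt ENNReal.ofReal_lt_top
    refine ⟨hi, ?_⟩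
    rw [← ofReal_integral_eq_lintegral_ofReal hi hnn] at h
    exact (ENNReal.ofReal_le_ofReal_iff hM).1 h

/-- Bounded continuous function from a nonneg continuous function and truncation level. -/
noncomputable def trunc (f : E → ℝ≥0) (hf : Continuous f) (R : ℝ≥0) : E →ᵇ ℝ≥0 :=
  BoundedContinuousFunction.mkOfBound ⟨fun x => min (f x) R, by fun_prop⟩ R (fun x y => by
    rw [NNReal.dist_eq]
    have h1 : ((min (f x) R : ℝ≥0) : ℝ) ≤ R := by exact_mod_cast min_le_right _ _
    have h2 : ((min (f y) R : ℝ≥0) : ℝ) ≤ R := by exact_mod_cast min_le_right _ _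
    have h3 := (min (f x) R).coe_nonneg
    have h4 := (min (f y) R).coe_nonneg
    exact abs_sub_le_iff.2 ⟨by simp, by simp⟩)

lemma lintegral_trunc_iff (f : E → ℝ≥0) (hf : Continuous f) (μ : Measure E) (c : ℝ≥0∞) :
    ∫⁻ x, f x ∂μ ≤ c ↔ ∀ N : ℕ, ∫⁻ x, trunc f hf N x ∂μ ≤ c := by
  constructor
  · intro h N
    refine le_trans (lintegral_mono fun x => ?_) h
    exact ENNReal.coe_le_coe.2 (min_le_left (f x) (N : ℝ≥0))
  · intro h
    have hs : ∀ x, (f x : ℝ≥0∞) = ⨆ N : ℕ, (trunc f hf N x : ℝ≥0∞) := by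
      intro x
      apply le_antisymm
      · obtain ⟨N, hN⟩ := exists_nat_ge (f x)
        refine le_iSup_of_le N ?_
        have : trunc f hf N x = f x := min_eq_left hN
        rw [this]
      · exact iSup_le fun N => by exact_mod_cast min_le_left (f x) (N : ℝ≥0)
    simp_rw [hs]
    rw [lintegral_iSup]
    · exact iSup_le h
    · intro N
      exact ((trunc f hf N).continuous.measurable).coe_nnreal_ennreal
    · intro N N' hNN x
      have : min (f x) (N : ℝ≥0) ≤ min (f x) (N' : ℝ≥0) :=
        min_le_min le_rfl (by exact_mod_cast hNN)
      exact ENNReal.coe_le_coe.2 this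

lemma isClosed_lintegral_le (f : E → ℝ≥0) (hf : Continuous f) (c : ℝ≥0∞) :
    IsClosed {μ : ProbabilityMeasure E | ∫⁻ x, f x ∂(μ : Measure E) ≤ c} := by
  simp_rw [lintegral_trunc_iff f hf, Set.ofPred_forall]
  exact isClosed_iInter fun N => isClosed_le
    (ProbabilityMeasure.continuous_lintegral_boundedContinuousFunction _) continuous_const

lemma supp_iff (S : Set E) (hS : IsClosed S) (hne : S.Nonempty) (μ : Measure E) :
    μ Sᶜ = 0 ↔ ∫⁻ x, (Metric.infNndist x S : ℝ≥0) ∂μ ≤ 0 := by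
  rw [nonpos_iff_eq_zero, lintegral_eq_zero_iff
    ((Metric.continuous_infNndist_pt S).measurable.coe_nnreal_ennreal), Filter.EventuallyEq,
    ae_iff]
  have : {a | ¬ ((Metric.infNndist a S : ℝ≥0) : ℝ≥0∞) = (0 : E → ℝ≥0∞) a} = Sᶜ := by
    ext x
    have := hS.mem_iff_infDist_zero hne (x := x)
    have h2 : Metric.infNndist x S = 0 ↔ Metric.infDist x S = 0 := by
      rw [← Metric.coe_infNndist, NNReal.coe_eq_zero]
    simp only [Set.mem_compl_iff, this]
    simp [h2]
  rw [this]

lemma isClosed_K0 (S : Set E) (hS : IsClosed S) (hne : S.Nonempty) (d : ℕ) (M : ℝ) :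
    IsClosed (K0 S d M) := by
  unfold K0
  simp_rw [supp_iff S hS hne]
  exact (isClosed_lintegral_le _ (Metric.continuous_infNndist_pt S) _).inter
    (isClosed_lintegral_le (fun x : E => ‖x‖₊ ^ d) (by fun_prop) _)

lemma isCompact_K0 (S : Set E) (hS : IsClosed S) (hne : S.Nonempty) (d : ℕ) (hd : 1 ≤ d)
    (M : ℝ) : IsCompact (K0 S d M) := by
  rw [← (isClosed_K0 S hS hne d M).closure_eq]
  apply isCompact_closure_of_isTightMeasureSet
  apply isTightMeasureSet_of_tendsto_measure_norm_gt
  have hlim : Tendsto (fun r : ℝ => ENNReal.ofReal M / ENNReal.ofReal r) atTop (𝓝 0) := by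
    have h := ENNReal.Tendsto.const_div (a := ENNReal.ofReal M)
      (ENNReal.tendsto_ofReal_atTop) (Or.inr ENNReal.ofReal_ne_top)
    simpa using h
  refine tendsto_of_tendsto_of_tendsto_of_le_of_le' tendsto_const_nhds hlim
    (Eventually.of_forall fun _ => zero_le) ?_
  filter_upwards [eventually_ge_atTop (1 : ℝ)] with r hr
  refine iSup₂_le ?_
  rintro _ ⟨μ, hμ, rfl⟩
  have hr0 : ENNReal.ofReal r ≠ 0 := by simp; linarith
  have hmk := meas_ge_le_lintegral_div (μ := (μ : Measure E))
    (f := fun x : E => ((‖x‖₊ ^ d : ℝ≥0) : ℝ≥0∞)) (by fun_prop) hr0 ENNReal.ofReal_ne_top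
  refine (measure_mono ?_).trans (hmk.trans (ENNReal.div_le_div_right hμ.2 _))
  intro x hx
  have hx : r < ‖x‖ := hx
  have h1 : r ≤ ‖x‖ ^ d := hx.le.trans (le_self_pow₀ (hr.trans hx.le) (by omega))
  show ENNReal.ofReal r ≤ ((‖x‖₊ ^ d : ℝ≥0) : ℝ≥0∞)
  rw [ENNReal.ofReal_le_iff_le_toReal ENNReal.coe_ne_top]
  simpa using h1

lemma pow_bound (r R : ℝ) (d : ℕ) (hd : 1 ≤ d) (hR : 1 ≤ R) (hr : R ≤ r) :
    1 + r ^ (d - 1) ≤ 2 / R * r ^ d := by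
  obtain ⟨k, rfl⟩ : ∃ k, d = k + 1 := ⟨d - 1, by omega⟩
  have h1 : 1 ≤ r ^ k := one_le_pow₀ (hR.trans hr)
  have h2 : r ^ k * R ≤ r ^ k * r := by gcongr
  simp only [Nat.add_sub_cancel]
  rw [div_mul_eq_mul_div, le_div_iff₀ (by linarith), pow_succ]
  nlinarith

lemma integrable_of_growth (S : Set E) (d : ℕ) (hd : 1 ≤ d) (M : ℝ) (hM : 0 ≤ M)
    (f : E → ℝ) (hf : Continuous f) (C : ℝ) (hC : 0 ≤ C)
    (hb : ∀ x ∈ S, |f x| ≤ C * (1 + ‖x‖ ^ (d - 1))) (μ : ProbabilityMeasure E)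
    (hμ : μ ∈ K0 S d M) : Integrable f (μ : Measure E) := by
  have hi := ((moment_iff (μ : Measure E) d M hM).2 hμ.2).1
  refine Integrable.mono' (g := fun x => C * (2 + 2 * ‖x‖ ^ d)) ?_ hf.aestronglyMeasurable ?_
  · exact (((integrable_const 2).add (hi.const_mul 2)).const_mul C)
  · have : ∀ᵐ x ∂(μ : Measure E), x ∈ S := hμ.1
    filter_upwards [this] with x hx
    refine (hb x hx).trans (mul_le_mul_of_nonneg_left ?_ hC)
    rcases le_total 1 ‖x‖ with h | h
    · have := pow_bound ‖x‖ 1 d hd le_rfl h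
      norm_num at this
      linarith
    · have := pow_le_one₀ (n := d - 1) (norm_nonneg x) h
      have : 0 ≤ ‖x‖ ^ d := by positivity
      linarith

/-- cutoff -/
noncomputable def chi (R : ℝ) (x : E) : ℝ := max 0 (min 1 (R + 1 - ‖x‖))

lemma chi_cont (R : ℝ) : Continuous (chi R : E → ℝ) := by unfold chi; fun_prop

lemma continuousOn_integral (S : Set E) (d : ℕ) (hd : 1 ≤ d) (M : ℝ) (hM : 0 ≤ M)
    (f : E → ℝ) (hf : Continuous f) (C : ℝ) (hC : 0 ≤ C)
    (hb : ∀ x ∈ S, |f x| ≤ C * (1 + ‖x‖ ^ (d - 1))) :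
    ContinuousOn (fun μ : ProbabilityMeasure E => ∫ x, f x ∂(μ : Measure E)) (K0 S d M) := by
  apply continuousOn_of_uniform_approx_of_continuousOn
  intro u hu
  obtain ⟨ε, hε, hεu⟩ := Metric.mem_uniformity_dist.1 hu
  obtain ⟨R, hR1, hR⟩ : ∃ R : ℝ, 1 ≤ R ∧ 2 * C * M < ε * R := by
    refine ⟨max 1 (2 * C * M / ε + 1), le_max_left _ _, ?_⟩
    have : 2 * C * M / ε < max 1 (2 * C * M / ε + 1) :=
      lt_of_lt_of_le (by linarith) (le_max_right _ _)
    rw [div_lt_iff₀ hε] at this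
    linarith
  have hcont : Continuous fun x : E => f x * chi R x := hf.mul (chi_cont R)
  have hsupp : HasCompactSupport fun x : E => f x * chi R x := by
    refine HasCompactSupport.intro (isCompact_closedBall (0 : E) (R + 1)) fun x hx => ?_
    have hx : R + 1 < ‖x‖ := by simpa using hx
    have : chi R x = 0 := max_eq_left (min_le_of_right_le (by linarith))
    simp [this]
  obtain ⟨B, hB⟩ := hsupp.exists_bound_of_continuous hcont
  let F : E →ᵇ ℝ := BoundedContinuousFunction.ofNormedAddCommGroup _ hcont B hB
  refine ⟨fun μ => ∫ x, F x ∂(μ : Measure E),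
    (ProbabilityMeasure.continuous_integral_boundedContinuousFunction F).continuousOn, ?_⟩
  intro μ hμ
  apply hεu
  have hmom := (moment_iff (μ : Measure E) d M hM).2 hμ.2
  have hfi := integrable_of_growth S d hd M hM f hf C hC hb μ hμ
  have hFi : Integrable F (μ : Measure E) := F.integrable _
  rw [Real.dist_eq, ← integral_sub hfi hFi, ← Real.norm_eq_abs]
  have hae : ∀ᵐ x ∂(μ : Measure E), ‖f x - F x‖ ≤ 2 * C / R * ‖x‖ ^ d := by
    have : ∀ᵐ x ∂(μ : Measure E), x ∈ S := hμ.1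
    filter_upwards [this] with x hx
    have hFx : F x = f x * chi R x := rfl
    have h0 : 0 ≤ chi R x := le_max_left _ _
    have h1 : chi R x ≤ 1 := max_le zero_le_one (min_le_left _ _)
    rcases le_total ‖x‖ R with h | h
    · have : chi R x = 1 := by
        unfold chi
        rw [min_eq_left (by linarith), max_eq_right zero_le_one]
      rw [hFx, this]
      simp only [mul_one, sub_self, norm_zero]
      positivity
    · have e : f x - F x = f x * (1 - chi R x) := by rw [hFx]; ring
      rw [e, norm_mul, Real.norm_eq_abs, Real.norm_eq_abs]
      have h3 : |1 - chi R x| ≤ 1 := abs_le.2 ⟨by linarith, by linarith⟩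
      calc |f x| * |1 - chi R x| ≤ |f x| * 1 := by gcongr
        _ ≤ C * (1 + ‖x‖ ^ (d - 1)) := by simpa using hb x hx
        _ ≤ C * (2 / R * ‖x‖ ^ d) := by gcongr; exact pow_bound _ _ _ hd hR1 h
        _ = _ := by ring
  calc ‖∫ x, (f x - F x) ∂(μ : Measure E)‖
      ≤ ∫ x, 2 * C / R * ‖x‖ ^ d ∂(μ : Measure E) :=
        norm_integral_le_of_norm_le (hmom.1.const_mul _) hae
    _ = 2 * C / R * ∫ x, ‖x‖ ^ d ∂(μ : Measure E) := integral_const_mul _ _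
    _ ≤ 2 * C / R * M := by gcongr; exact hmom.2
    _ < ε := by
      rw [div_mul_eq_mul_div, div_lt_iff₀ (by linarith)]
      exact hR

end GMPAux

/-- Maximization half of Lemma 3: the supremum of the option-pricing GMP is finite and attained. -/
theorem gmp_supremum_attained
    (n d : ℕ) (hn : 1 ≤ n) (hd : 1 ≤ d) (M : ℝ) (hM : 0 < M)
    (φ : EuclideanSpace ℝ (Fin n) → ℝ) (hφc : Continuous φ)
    (C₀ : ℝ) (hC₀ : 0 ≤ C₀)
    (hφ : ∀ x : EuclideanSpace ℝ (Fin n), (∀ i, 0 ≤ x i) →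
        0 ≤ φ x ∧ φ x ≤ C₀ * (1 + ‖x‖ ^ (d - 1)))
    (m : ℕ) (g : Fin m → EuclideanSpace ℝ (Fin n) → ℝ) (hgc : ∀ i, Continuous (g i))
    (C : Fin m → ℝ) (hC : ∀ i, 0 ≤ C i)
    (hg : ∀ i, ∀ x : EuclideanSpace ℝ (Fin n), (∀ j, 0 ≤ x j) →
        |g i x| ≤ C i * (1 + ‖x‖ ^ (d - 1)))
    (q : Fin m → ℝ)
    (F : Set (Measure (EuclideanSpace ℝ (Fin n))))
    (hF : F = {μ | IsProbabilityMeasure μ ∧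
        μ {x | ¬ ∀ i, 0 ≤ x i} = 0 ∧
        (∀ i, Integrable (g i) μ ∧ ∫ x, g i x ∂μ = q i) ∧
        Integrable (fun x => ‖x‖ ^ d) μ ∧ ∫ x, ‖x‖ ^ d ∂μ ≤ M})
    (hne : F.Nonempty) :
    BddAbove ((fun ν => ∫ x, φ x ∂ν) '' F) ∧
    ∃ μ ∈ F, ∫ x, φ x ∂μ = sSup ((fun ν => ∫ x, φ x ∂ν) '' F) := by
  classical
  set S : Set (EuclideanSpace ℝ (Fin n)) := {x | ∀ i, 0 ≤ x i} with hSdef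
  have hS : IsClosed S := by
    rw [hSdef, Set.ofPred_forall]
    exact isClosed_iInter fun i => isClosed_le continuous_const (by fun_prop)
  have hSne : S.Nonempty := ⟨0, fun i => by simp⟩
  have hφb : ∀ x ∈ S, |φ x| ≤ C₀ * (1 + ‖x‖ ^ (d - 1)) := fun x hx => by
    rw [abs_of_nonneg (hφ x hx).1]
    exact (hφ x hx).2
  have hK0 := GMPAux.isCompact_K0 S hS hSne d hd M
  have hcg := fun i => GMPAux.continuousOn_integral S d hd M hM.le (g i) (hgc i) (C i) (hC i)
    (fun x hx => hg i x hx)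
  have hcφ := GMPAux.continuousOn_integral S d hd M hM.le φ hφc C₀ hC₀ hφb
  let K : Set (ProbabilityMeasure (EuclideanSpace ℝ (Fin n))) :=
    GMPAux.K0 S d M ∩ {μ | ∀ i, ∫ x, g i x ∂(μ : Measure (EuclideanSpace ℝ (Fin n))) = q i}
  have hKc : IsCompact K := by
    have hcl : IsClosed K := by
      have := ContinuousOn.preimage_isClosed_of_isClosed (continuousOn_pi.2 hcg)
        hK0.isClosed (isClosed_singleton (x := q))
      convert! this using 1
      ext μ
      simp [K, funext_iff]
    exact hK0.of_isClosed_subset hcl Set.inter_subset_left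
  have hmem : ∀ μ : ProbabilityMeasure (EuclideanSpace ℝ (Fin n)),
      μ ∈ K ↔ (μ : Measure (EuclideanSpace ℝ (Fin n))) ∈ F := by
    intro μ
    rw [hF]
    constructor
    · rintro ⟨h0, hq⟩
      exact ⟨inferInstance, h0.1, fun i => ⟨GMPAux.integrable_of_growth S d hd M hM.le (g i)
        (hgc i) (C i) (hC i) (fun x hx => hg i x hx) μ h0, hq i⟩,
        (GMPAux.moment_iff _ d M hM.le).2 h0.2⟩
    · rintro ⟨_, h1, h2, h3⟩
      exact ⟨⟨h1, (GMPAux.moment_iff _ d M hM.le).1 h3⟩, fun i => (h2 i).2⟩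
  have hlift : ∀ ν ∈ F, ∃ μ ∈ K, (μ : Measure (EuclideanSpace ℝ (Fin n))) = ν := by
    intro ν hν
    have hp : IsProbabilityMeasure ν := by
      rw [hF] at hν
      exact hν.1
    exact ⟨⟨ν, hp⟩, (hmem _).2 hν, rfl⟩
  obtain ⟨ν₀, hν₀⟩ := hne
  obtain ⟨μ₀, hμ₀, -⟩ := hlift ν₀ hν₀
  obtain ⟨μ, hμ, hmax⟩ := hKc.exists_isMaxOn ⟨μ₀, hμ₀⟩ (hcφ.mono Set.inter_subset_left)
  have hgr : IsGreatest ((fun ν => ∫ x, φ x ∂ν) '' F)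
      (∫ x, φ x ∂(μ : Measure (EuclideanSpace ℝ (Fin n)))) := by
    refine ⟨⟨μ, (hmem μ).1 hμ, rfl⟩, ?_⟩
    rintro _ ⟨ν, hν, rfl⟩
    obtain ⟨μ', hμ', rfl⟩ := hlift ν hν
    exact hmax hμ'
  exact ⟨⟨_, hgr.2⟩, μ, (hmem μ).1 hμ, hgr.csSup_eq.symm⟩
end

section
/- Let n ≥ 1, let Nᵢ ∈ ℕ and strikes k_{i,j} ≥ 0 with prices q_{i,j} ∈ ℝ for i ∈ [n], j ∈ [Nᵢ], let f₁,…,f_m be real polynomials in n variables with values p₁,…,p_m ∈ ℝ, let M > 0, let d be an even integer with d ≥ 1 + max of the degrees of the data, and let φ : ℝⁿ → ℝ be continuous with 0 ≤ φ(x) ≤ C₀·(1 + ‖x‖₂^{d−1}) on ℝⁿ₊. Let F be the set of Borel probability measures μ supported in ℝⁿ₊ satisfying ∫ max(0, x_i − k_{i,j}) dμ(x) = q_{i,j} for all i ∈ [n], j ∈ [Nᵢ], ∫ f_ℓ dμ = p_ℓ for all ℓ ∈ [m], and ∫ ‖x‖₂^d dμ ≤ M. If F is nonempty, then the infimum (respectively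 the supremum) of ∫ φ dμ over F is attained by a finitely atomic measure, i.e. by a measure of the form μ* = Σ_{j=1}^{N} ω_j δ_{x_j} with ω_j > 0, x_j ∈ ℝⁿ₊, and N ≤ n·(Σ_{i=1}^n Nᵢ) + m + 3. -/
open MeasureTheory

theorem weak_sep {V : Type*} [NormedAddCommGroup V] [NormedSpace ℝ V] [FiniteDimensional ℝ V]
    {s : Set V} (hs : Convex ℝ s) (hne : s.Nonempty) {v : V} (hv : v ∉ s) :
    ∃ f : V →L[ℝ] ℝ, f ≠ 0 ∧ ∀ y ∈ s, f v ≤ f y := by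
  by_cases hi : (interior s).Nonempty
  · obtain ⟨f, hf⟩ := geometric_hahn_banach_point_open hs.interior isOpen_interior
      (fun h => hv (interior_subset h))
    refine ⟨f, ?_, ?_⟩
    · rintro rfl
      obtain ⟨y, hy⟩ := hi
      simpa using hf y hy
    · intro y hy
      have h1 : y ∈ closure (interior s) := by
        rw [hs.closure_interior_eq_closure_of_nonempty_interior hi]
        exact subset_closure hy
      have h2 : closure (interior s) ⊆ {y | f v ≤ f y} :=
        closure_minimal (fun z hz => (hf z hz).le) (isClosed_le continuous_const f.continuous)
      exact h2 h1
  · have h1 : affineSpan ℝ s ≠ ⊤ := by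
      intro h
      apply hi
      rw [← interior_convexHull_nonempty_iff_affineSpan_eq_top, hs.convexHull_eq] at h
      exact h
    have h2 : (affineSpan ℝ s).direction ≠ ⊤ := by
      intro h
      exact h1 ((AffineSubspace.direction_eq_top_iff_of_nonempty
        ((affineSpan_nonempty ℝ).2 hne)).1 h)
    obtain ⟨f, hf0, hf⟩ := Submodule.exists_le_ker_of_lt_top _ (lt_top_iff_ne_top.2 h2)
    obtain ⟨y₀, hy₀⟩ := hne
    have hc : ∀ y ∈ s, f y = f y₀ := by
      intro y hy
      have : y -ᵥ y₀ ∈ (affineSpan ℝ s).direction :=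
        AffineSubspace.vsub_mem_direction (subset_affineSpan ℝ s hy) (subset_affineSpan ℝ s hy₀)
      have := hf this
      simp only [LinearMap.mem_ker, vsub_eq_sub, map_sub] at this
      linarith
    have hF0 : (LinearMap.toContinuousLinearMap f) ≠ 0 := by
      intro h
      apply hf0
      ext x
      exact congrArg (fun g : V →L[ℝ] ℝ => g x) h
    rcases le_total (f v) (f y₀) with h | h
    · refine ⟨LinearMap.toContinuousLinearMap f, hF0, fun y hy => ?_⟩
      simp [hc y hy, h]
    · refine ⟨-LinearMap.toContinuousLinearMap f, neg_ne_zero.2 hF0, fun y hy => ?_⟩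
      simp [hc y hy, h]

theorem integral_mem_of_convex {Ω : Type*} [MeasurableSpace Ω] (μ : Measure Ω)
    [IsProbabilityMeasure μ] (D : ℕ) : ∀ {V : Type} [NormedAddCommGroup V] [NormedSpace ℝ V]
    [FiniteDimensional ℝ V] (_ : Module.finrank ℝ V = D)
    {s : Set V} (_ : Convex ℝ s) (G : Ω → V) (_ : Integrable G μ) (_ : ∀ᵐ x ∂μ, G x ∈ s),
    ∫ x, G x ∂μ ∈ s := by
  induction D using Nat.strong_induction_on with
  | _ D ih =>
  intro V _ _ _ hD s hs G hG hGs
  by_contra hv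
  set v := ∫ x, G x ∂μ with hvdef
  have hne : s.Nonempty := by
    obtain ⟨x, hx⟩ := hGs.exists
    exact ⟨_, hx⟩
  obtain ⟨f, hf0, hf⟩ := weak_sep hs hne hv
  have hGI : Integrable (fun x => G x - v) μ := hG.sub (integrable_const v)
  have hIntg : Integrable (fun x => f (G x - v)) μ :=
    f.integrable_comp hGI
  have hGv : ∫ x, (G x - v) ∂μ = 0 := by
    rw [integral_sub hG (integrable_const v)]; simp [hvdef]
  have h0 : ∫ x, f (G x - v) ∂μ = 0 := by
    rw [f.integral_comp_comm hGI, hGv, map_zero]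
  have hae : (fun x => f (G x - v)) =ᵐ[μ] 0 := by
    rw [← integral_eq_zero_iff_of_nonneg_ae _ hIntg]
    · exact h0
    · filter_upwards [hGs] with x hx
      simp [hf _ hx]
  let W := LinearMap.ker (f : V →ₗ[ℝ] ℝ)
  obtain ⟨P, hP⟩ := W.subtype.exists_leftInverse_of_injective (by simp)
  have hP' : ∀ w : W, P w = w := fun w => LinearMap.congr_fun hP w
  let P' : V →L[ℝ] W := LinearMap.toContinuousLinearMap P
  have hlt : Module.finrank ℝ W < D := by
    rw [← hD]
    apply Submodule.finrank_lt
    intro h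
    apply hf0
    ext x
    have : x ∈ W := by rw [h]; trivial
    exact this
  have key := ih _ hlt (V := W) rfl (s := {w : W | (w : V) + v ∈ s}) 
    (by
      have := (hs.translate_preimage_left v).is_linear_preimage (f := W.subtype) W.subtype.isLinear
      exact this)
    (fun x => P' (G x - v)) (P'.integrable_comp hGI)
    (by
      filter_upwards [hGs, hae] with x hx hx0
      have hm : G x - v ∈ W := hx0
      have : P' (G x - v) = ⟨G x - v, hm⟩ := hP' ⟨G x - v, hm⟩
      simp [this, hx])
  rw [P'.integral_comp_comm hGI, hGv, map_zero] at key
  apply hv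
  simpa using key

theorem richter {E : Type*} [MeasurableSpace E] (μ : Measure E) [IsProbabilityMeasure μ]
    {ι : Type} [Fintype ι] (g : ι → E → ℝ) (hg : ∀ c, Integrable (g c) μ) (K : Set E)
    (hK : ∀ᵐ x ∂μ, x ∈ K) :
    ∃ (w : Fin (Fintype.card ι + 1) → ℝ) (x : Fin (Fintype.card ι + 1) → E),
      (∀ j, 0 ≤ w j) ∧ (∀ j, x j ∈ K) ∧ ∑ j, w j = 1 ∧
      ∀ c, ∑ j, w j * g c (x j) = ∫ y, g c y ∂μ := by
  classical
  obtain ⟨x₀, hx₀⟩ := hK.exists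
  let G : E → ι → ℝ := fun x c => g c x
  have hG : Integrable G μ := Integrable.of_eval hg
  have hmem : ∫ y, G y ∂μ ∈ convexHull ℝ (G '' K) := by
    refine integral_mem_of_convex μ _ rfl (convex_convexHull ℝ _) G hG ?_
    filter_upwards [hK] with x hx
    exact subset_convexHull ℝ _ ⟨x, hx, rfl⟩
  obtain ⟨κ, _, z, w, hz, hind, hw, hw1, hwz⟩ := eq_pos_convex_span_of_mem_convexHull hmem
  have hz' : ∀ i, ∃ x ∈ K, G x = z i := fun i => hz ⟨i, rfl⟩
  choose x hxK hx using hz'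
  have hcard : Fintype.card κ ≤ Fintype.card ι + 1 := by
    have h1 := hind.card_le_finrank_succ
    have h2 := Submodule.finrank_le (vectorSpan ℝ (Set.range z))
    rw [Module.finrank_fintype_fun_eq_card] at h2
    omega
  obtain ⟨e⟩ : Nonempty (κ ↪ Fin (Fintype.card ι + 1)) :=
    Function.Embedding.nonempty_of_card_le (by simpa using hcard)
  have hsum : ∀ h : Fin (Fintype.card ι + 1) → ℝ,
      ∑ j, Function.extend e w 0 j * h j = ∑ i, w i * h (e i) := by
    intro h
    symm
    apply Finset.sum_of_injOn e e.injective.injOn (by simp)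
    · intro j _ hj
      rw [Function.extend_apply' _ _ _ (by simpa using hj)]
      simp
    · intro i _
      rw [e.injective.extend_apply]
  refine ⟨Function.extend e w 0, Function.extend e x (fun _ => x₀), ?_, ?_, ?_, ?_⟩
  · intro j
    by_cases h : ∃ i, e i = j
    · obtain ⟨i, rfl⟩ := h
      rw [e.injective.extend_apply]; exact (hw i).le
    · rw [Function.extend_apply' _ _ _ h]; simp
  · intro j
    by_cases h : ∃ i, e i = j
    · obtain ⟨i, rfl⟩ := h
      rw [e.injective.extend_apply]; exact hxK i
    · rw [Function.extend_apply' _ _ _ h]; exact hx₀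
  · have := hsum 1
    simpa [hw1] using this
  · intro c
    rw [hsum (fun j => g c (Function.extend e x (fun _ => x₀) j))]
    have h1 := congrFun hwz c
    rw [eval_integral hg] at h1
    rw [← h1, Finset.sum_apply]
    refine Finset.sum_congr rfl fun i _ => ?_
    rw [e.injective.extend_apply, Pi.smul_apply, smul_eq_mul, ← hx i]

/-- limit of one atom -/
theorem atom_limit {E : Type} [NormedAddCommGroup E] [ProperSpace E] (K : Set E)
    (hK : IsClosed K) (h0 : (0 : E) ∈ K) (d : ℕ) (hd : 1 ≤ d) (M : ℝ) (U : Ultrafilter ℕ)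
    (w : ℕ → ℝ) (x : ℕ → E) (hw : ∀ t, 0 ≤ w t) (hw1 : ∀ t, w t ≤ 1) (hx : ∀ t, x t ∈ K)
    (hM : ∀ t, w t * ‖x t‖ ^ d ≤ M) :
    ∃ (w' : ℝ) (x' : E) (l : ℝ), 0 ≤ w' ∧ x' ∈ K ∧ w' * ‖x'‖ ^ d ≤ l ∧
      Filter.Tendsto (fun t => w t * ‖x t‖ ^ d) U (nhds l) ∧
      ∀ (g : E → ℝ) (C : ℝ), Continuous g → (∀ y ∈ K, |g y| ≤ C * (1 + ‖y‖ ^ (d - 1))) →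
        Filter.Tendsto (fun t => w t * g (x t)) U (nhds (w' * g x')) := by
  have hnn : ∀ t, 0 ≤ w t * ‖x t‖ ^ d := fun t => mul_nonneg (hw t) (by positivity)
  have cpt : ∀ {X : Type _} [TopologicalSpace X] (S : Set X), IsCompact S → ∀ u : ℕ → X,
      (∀ᶠ t in (U : Filter ℕ), u t ∈ S) → ∃ a ∈ S, Filter.Tendsto u U (nhds a) := by
    intro X _ S hS u hu
    obtain ⟨a, ha, h⟩ := hS.ultrafilter_le_nhds (U.map u)
      (by
        rw [Filter.le_principal_iff]
        exact hu)
    exact ⟨a, ha, h⟩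
  obtain ⟨l, hl, hlt⟩ := cpt (Set.Icc 0 M) isCompact_Icc (fun t => w t * ‖x t‖ ^ d)
    (Filter.Eventually.of_forall fun t => ⟨hnn t, hM t⟩)
  by_cases hb : ∃ R, ∀ᶠ t in (U : Filter ℕ), ‖x t‖ ≤ R
  · obtain ⟨R, hR⟩ := hb
    obtain ⟨x', hx', hxt⟩ := cpt (K ∩ Metric.closedBall 0 R)
      ((isCompact_closedBall _ _).inter_left hK) x
      (by filter_upwards [hR] with t ht; exact ⟨hx t, mem_closedBall_zero_iff.2 ht⟩)
    obtain ⟨w', hw', hwt⟩ := cpt (Set.Icc 0 1) isCompact_Icc w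
      (Filter.Eventually.of_forall fun t => ⟨hw t, hw1 t⟩)
    refine ⟨w', x', l, hw'.1, hx'.1, ?_, hlt, ?_⟩
    · exact (tendsto_nhds_unique (hwt.mul (hxt.norm.pow d)) hlt).le
    · intro g C hg _
      exact hwt.mul ((hg.tendsto x').comp hxt)
  · have hinf : Filter.Tendsto (fun t => ‖x t‖) U Filter.atTop := by
      rw [Filter.tendsto_atTop]
      intro R
      push Not at hb
      have := hb R
      filter_upwards [this] with t ht using ht.le
    refine ⟨0, 0, l, le_rfl, h0, by simpa using hl.1, hlt, ?_⟩
    intro g C _ hg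
    rw [zero_mul]
    have hC : 0 ≤ C := by
      by_contra hC
      have h1 := (abs_nonneg _).trans (hg 0 h0)
      have : 0 < 1 + ‖(0 : E)‖ ^ (d - 1) := by positivity
      nlinarith
    have hlim : Filter.Tendsto (fun t => (2 * C * M) * ‖x t‖⁻¹) U (nhds 0) := by
      simpa using (tendsto_inv_atTop_zero.comp hinf).const_mul (2 * C * M)
    refine squeeze_zero_norm' ?_ hlim
    filter_upwards [hinf.eventually_ge_atTop 1] with t ht
    have hpos : 0 < ‖x t‖ := by linarith
    rw [norm_mul, Real.norm_eq_abs, Real.norm_eq_abs, abs_of_nonneg (hw t)]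
    have h1 : (1 : ℝ) ≤ ‖x t‖ ^ (d - 1) := one_le_pow₀ ht
    have h2 : |g (x t)| ≤ C * (2 * ‖x t‖ ^ (d - 1)) :=
      (hg _ (hx t)).trans (by gcongr; linarith)
    have h3 : ‖x t‖ ^ d = ‖x t‖ ^ (d - 1) * ‖x t‖ := by
      rw [← pow_succ]; congr 1; omega
    have h4 : w t * ‖x t‖ ^ (d - 1) ≤ M * ‖x t‖⁻¹ := by
      rw [← div_eq_mul_inv, le_div_iff₀ hpos, mul_assoc, ← h3]; exact hM t
    calc w t * |g (x t)| ≤ w t * (C * (2 * ‖x t‖ ^ (d - 1))) :=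
          mul_le_mul_of_nonneg_left h2 (hw t)
      _ = 2 * C * (w t * ‖x t‖ ^ (d - 1)) := by ring
      _ ≤ 2 * C * (M * ‖x t‖⁻¹) := by gcongr
      _ = _ := by ring

theorem poly_growth {n : ℕ} (d : ℕ) (f : MvPolynomial (Fin n) ℝ) (hf : f.totalDegree ≤ d) :
    ∃ C : ℝ, ∀ x : EuclideanSpace ℝ (Fin n),
      |MvPolynomial.eval (fun i => x i) f| ≤ C * (1 + ‖x‖ ^ d) := by
  refine ⟨∑ s ∈ f.support, |f.coeff s|, fun x => ?_⟩
  rw [MvPolynomial.eval_eq', Finset.sum_mul]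
  refine (Finset.abs_sum_le_sum_abs _ _).trans (Finset.sum_le_sum fun s hs => ?_)
  rw [abs_mul]
  refine mul_le_mul_of_nonneg_left ?_ (abs_nonneg _)
  have h1 : |∏ i, x i ^ s i| ≤ ‖x‖ ^ (∑ i, s i) := by
    rw [Finset.abs_prod, ← Finset.prod_pow_eq_pow_sum]
    refine Finset.prod_le_prod (fun i _ => abs_nonneg _) fun i _ => ?_
    rw [abs_pow]
    exact pow_le_pow_left₀ (abs_nonneg _) (by simpa using PiLp.norm_apply_le x i) _
  have h2 : ∑ i, s i ≤ d := by
    have := (MvPolynomial.le_totalDegree hs).trans hf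
    rwa [Finsupp.sum_fintype _ _ (by simp)] at this
  refine h1.trans ?_
  rcases le_total ‖x‖ 1 with h | h
  · have := pow_le_one₀ (n := ∑ i, s i) (norm_nonneg x) h
    have : 0 ≤ ‖x‖ ^ d := by positivity
    linarith
  · have := pow_le_pow_right₀ h h2
    linarith

theorem integrable_of_growth {E : Type} [NormedAddCommGroup E] [MeasurableSpace E] [BorelSpace E]
    [SecondCountableTopology E]
    (μ : Measure E) [IsProbabilityMeasure μ] (K : Set E) (hK : ∀ᵐ x ∂μ, x ∈ K) (d : ℕ)
    (hIntg : Integrable (fun x : E => ‖x‖ ^ d) μ) (g : E → ℝ) (hg : Continuous g) (C : ℝ)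
    (hgC : ∀ y ∈ K, |g y| ≤ C * (1 + ‖y‖ ^ (d - 1))) :
    Integrable (fun x : E => ‖x‖ ^ (d - 1)) μ ∧ Integrable g μ := by
  have h1 : Integrable (fun x : E => ‖x‖ ^ (d - 1)) μ := by
    refine ((integrable_const (1 : ℝ)).add hIntg).mono'
      (by fun_prop) (Filter.Eventually.of_forall fun x => ?_)
    rw [Real.norm_eq_abs, abs_of_nonneg (by positivity)]
    simp only [Pi.add_apply]
    rcases le_total ‖x‖ 1 with h | h
    · have := pow_le_one₀ (n := d - 1) (norm_nonneg x) h
      have : 0 ≤ ‖x‖ ^ d := by positivity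
      linarith
    · have := pow_le_pow_right₀ h (Nat.sub_le d 1)
      linarith
  refine ⟨h1, (((integrable_const (1 : ℝ)).add h1).const_mul C).mono'
    hg.aestronglyMeasurable ?_⟩
  filter_upwards [hK] with x hx
  exact hgC x hx

theorem core {E : Type} [NormedAddCommGroup E] [ProperSpace E] [MeasurableSpace E] [BorelSpace E]
    [SecondCountableTopology E] (K : Set E)
    (hK : IsClosed K) (h0 : (0 : E) ∈ K) (d : ℕ) (hd : 1 ≤ d) (M : ℝ)
    {ι : Type} [Fintype ι] (g : ι → E → ℝ) (hg : ∀ c, Continuous (g c))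
    (hgC : ∀ c, ∃ C : ℝ, ∀ y ∈ K, |g c y| ≤ C * (1 + ‖y‖ ^ (d - 1)))
    (φ : E → ℝ) (hφ : Continuous φ) (Cφ : ℝ) (hφC : ∀ y ∈ K, |φ y| ≤ Cφ * (1 + ‖y‖ ^ (d - 1)))
    (b : ι → ℝ) (L : ℝ) (ν : ℕ → Measure E) (hν : ∀ t, IsProbabilityMeasure (ν t))
    (hνK : ∀ t, ∀ᵐ x ∂(ν t), x ∈ K) (hνg : ∀ t c, ∫ x, g c x ∂(ν t) = b c)
    (hνi : ∀ t, Integrable (fun x => ‖x‖ ^ d) (ν t))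
    (hνM : ∀ t, ∫ x, ‖x‖ ^ d ∂(ν t) ≤ M)
    (hL : Filter.Tendsto (fun t => ∫ x, φ x ∂(ν t)) Filter.atTop (nhds L)) :
    ∃ (J : ℕ) (ω : Fin J → ℝ) (pts : Fin J → E), J ≤ Fintype.card ι + 3 ∧ (∀ j, 0 < ω j) ∧
      (∀ j, pts j ∈ K) ∧ ∑ j, ω j = 1 ∧ (∀ c, ∑ j, ω j * g c (pts j) = b c) ∧
      ∑ j, ω j * ‖pts j‖ ^ d ≤ M ∧ ∑ j, ω j * φ (pts j) = L := by
  classical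
  choose C hC using hgC
  let G : Option (Option ι) → E → ℝ := fun o => match o with
    | none => φ
    | some none => fun x => ‖x‖ ^ d
    | some (some c) => g c
  have hR := fun t => richter (ν t) G (by
    rintro (_ | _ | c)
    · exact (integrable_of_growth (ν t) K (hνK t) d (hνi t) φ hφ Cφ hφC).2
    · exact hνi t
    · exact (integrable_of_growth (ν t) K (hνK t) d (hνi t) (g c) (hg c) (C c) (hC c)).2)
    K (hνK t)
  choose w x hw hx hw1 hwG using hR
  have hwφ : ∀ t, ∑ j, w t j * φ (x t j) = ∫ y, φ y ∂(ν t) := fun t => hwG t none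
  have hwM : ∀ t, ∑ j, w t j * ‖x t j‖ ^ d ≤ M := fun t => (hwG t (some none)).trans_le (hνM t)
  have hwg : ∀ t c, ∑ j, w t j * g c (x t j) = b c :=
    fun t c => (hwG t (some (some c))).trans (hνg t c)
  let U : Ultrafilter ℕ := Filter.hyperfilter ℕ
  have hU : (U : Filter ℕ) ≤ Filter.atTop := Nat.hyperfilter_le_atTop
  have hat := fun j => atom_limit K hK h0 d hd M U (fun t => w t j) (fun t => x t j)
    (fun t => hw t j) (fun t => by
      rw [← hw1 t]
      exact Finset.single_le_sum (f := w t) (fun i _ => hw t i) (Finset.mem_univ j))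
    (fun t => hx t j)
    (fun t => le_trans (Finset.single_le_sum (f := fun j => w t j * ‖x t j‖ ^ d)
      (fun i _ => mul_nonneg (hw t i) (by positivity)) (Finset.mem_univ j)) (hwM t))
  choose w' x' l hw' hx' hl hlt hlim using hat
  have hlim' : ∀ (h : E → ℝ) (B : ℝ), Continuous h →
      (∀ y ∈ K, |h y| ≤ B * (1 + ‖y‖ ^ (d - 1))) →
      Filter.Tendsto (fun t => ∑ j, w t j * h (x t j)) U (nhds (∑ j, w' j * h (x' j))) :=
    fun h B hc hB => tendsto_finsetSum _ fun j _ => hlim j h B hc hB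
  have e1 : ∑ j, w' j = 1 := by
    have := hlim' (fun _ => 1) 1 continuous_const (fun y _ => by
      simp)
    simp only [mul_one, hw1] at this
    exact tendsto_nhds_unique this tendsto_const_nhds
  have e2 : ∀ c, ∑ j, w' j * g c (x' j) = b c := by
    intro c
    have := hlim' (g c) (C c) (hg c) (hC c)
    simp only [hwg] at this
    exact tendsto_nhds_unique this tendsto_const_nhds
  have e3 : ∑ j, w' j * φ (x' j) = L := by
    have := hlim' φ Cφ hφ hφC
    simp only [hwφ] at this
    exact tendsto_nhds_unique this (hL.mono_left hU)
  have e4 : ∑ j, w' j * ‖x' j‖ ^ d ≤ M :=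
    (Finset.sum_le_sum fun j _ => hl j).trans
      (le_of_tendsto (tendsto_finsetSum _ fun j _ => hlt j)
        (Filter.Eventually.of_forall fun t => hwM t))
  let S := {j // 0 < w' j}
  let e : S ≃ Fin (Fintype.card S) := Fintype.equivFin S
  have hs : ∀ h : Fin (Fintype.card (Option (Option ι)) + 1) → ℝ,
      ∑ i, w' (e.symm i) * h (e.symm i) = ∑ j, w' j * h j := by
    intro h
    rw [Equiv.sum_comp e.symm (fun s : S => w' s * h s),
      ← Finset.sum_subtype (Finset.univ.filter fun j => 0 < w' j) (by simp)
        (fun j => w' j * h j)]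
    apply Finset.sum_filter_of_ne
    intro j _ hj
    exact lt_of_le_of_ne (hw' j) (fun h => hj (by rw [← h, zero_mul]))
  refine ⟨Fintype.card S, fun i => w' (e.symm i), fun i => x' (e.symm i), ?_,
    fun i => (e.symm i).2, fun i => hx' _, ?_, ?_, ?_, ?_⟩
  · refine (Fintype.card_subtype_le _).trans ?_
    simp
  · simpa [e1] using hs 1
  · intro c
    rw [hs (fun j => g c (x' j)), e2 c]
  · rw [hs (fun j => ‖x' j‖ ^ d)]; exact e4
  · rw [hs (fun j => φ (x' j)), e3]

/-- Corollary 1: if the option-pricing GMP is feasible, its infimum (resp. supremum) is attained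
by a finitely atomic measure with at most `n·(∑ᵢ Nᵢ) + m + 3` atoms. -/
theorem gmp_attained_by_atomic_measure
    (n m : ℕ) (hn : 1 ≤ n)
    (N : Fin n → ℕ) (k : (i : Fin n) → Fin (N i) → ℝ) (hk : ∀ i j, 0 ≤ k i j)
    (q : (i : Fin n) → Fin (N i) → ℝ)
    (f : Fin m → MvPolynomial (Fin n) ℝ) (p : Fin m → ℝ)
    (M : ℝ) (hM : 0 < M)
    (d : ℕ) (hdeven : Even d) (hd2 : 2 ≤ d) (hdf : ∀ ℓ, (f ℓ).totalDegree < d)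
    (φ : EuclideanSpace ℝ (Fin n) → ℝ) (hφc : Continuous φ)
    (C₀ : ℝ) (hC₀ : 0 ≤ C₀)
    (hφ : ∀ x : EuclideanSpace ℝ (Fin n), (∀ i, 0 ≤ x i) →
        0 ≤ φ x ∧ φ x ≤ C₀ * (1 + ‖x‖ ^ (d - 1)))
    (F : Set (Measure (EuclideanSpace ℝ (Fin n))))
    (hF : F = {μ | IsProbabilityMeasure μ ∧
        μ {x | ¬ ∀ i, 0 ≤ x i} = 0 ∧
        (∀ i j, Integrable (fun x => max 0 (x i - k i j)) μ ∧
          ∫ x, max 0 (x i - k i j) ∂μ = q i j) ∧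
        (∀ ℓ, Integrable (fun x => MvPolynomial.eval (fun i => x i) (f ℓ)) μ ∧
          ∫ x, MvPolynomial.eval (fun i => x i) (f ℓ) ∂μ = p ℓ) ∧
        Integrable (fun x => ‖x‖ ^ d) μ ∧ ∫ x, ‖x‖ ^ d ∂μ ≤ M})
    (hne : F.Nonempty) :
    (∃ μ ∈ F, ∫ x, φ x ∂μ = sInf ((fun ν => ∫ x, φ x ∂ν) '' F) ∧
      ∃ (J : ℕ) (ω : Fin J → ℝ) (pts : Fin J → EuclideanSpace ℝ (Fin n)),
        J ≤ n * (∑ i, N i) + m + 3 ∧ (∀ j, 0 < ω j) ∧ (∀ j i, 0 ≤ pts j i) ∧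
        μ = ∑ j, ENNReal.ofReal (ω j) • Measure.dirac (pts j)) ∧
    (∃ μ ∈ F, ∫ x, φ x ∂μ = sSup ((fun ν => ∫ x, φ x ∂ν) '' F) ∧
      ∃ (J : ℕ) (ω : Fin J → ℝ) (pts : Fin J → EuclideanSpace ℝ (Fin n)),
        J ≤ n * (∑ i, N i) + m + 3 ∧ (∀ j, 0 < ω j) ∧ (∀ j i, 0 ≤ pts j i) ∧
        μ = ∑ j, ENNReal.ofReal (ω j) • Measure.dirac (pts j)) := by
  classical
  let K : Set (EuclideanSpace ℝ (Fin n)) := {x | ∀ i, 0 ≤ x i}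
  have hKc : IsClosed K := by
    have : K = ⋂ i, {x : EuclideanSpace ℝ (Fin n) | 0 ≤ x i} := by
      ext x; simp [K]
    rw [this]
    exact isClosed_iInter fun i => isClosed_le continuous_const (by fun_prop)
  have h0 : (0 : EuclideanSpace ℝ (Fin n)) ∈ K := fun i => by simp
  let g : (Σ i, Fin (N i)) ⊕ Fin m → EuclideanSpace ℝ (Fin n) → ℝ := fun c => match c with
    | .inl ij => fun x => max 0 (x ij.1 - k ij.1 ij.2)
    | .inr l => fun x => MvPolynomial.eval (fun i => x i) (f l)
  let b : (Σ i, Fin (N i)) ⊕ Fin m → ℝ := fun c => match c with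
    | .inl ij => q ij.1 ij.2
    | .inr l => p l
  have hg : ∀ c, Continuous (g c) := by
    rintro (ij | l)
    · change Continuous fun x : EuclideanSpace ℝ (Fin n) => max 0 (x ij.1 - k ij.1 ij.2)
      fun_prop
    · change Continuous fun x : EuclideanSpace ℝ (Fin n) => MvPolynomial.eval (fun i => x i) (f l)
      exact (MvPolynomial.continuous_eval (f l)).comp (by fun_prop)
  have hgC : ∀ c, ∃ C : ℝ, ∀ y ∈ K, |g c y| ≤ C * (1 + ‖y‖ ^ (d - 1)) := by
    rintro (ij | l)
    · refine ⟨1, fun y hy => ?_⟩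
      change |max 0 (y ij.1 - k ij.1 ij.2)| ≤ _
      rw [abs_of_nonneg (le_max_left _ _), one_mul]
      have h1 : y ij.1 ≤ ‖y‖ := (le_abs_self _).trans (by simpa using PiLp.norm_apply_le y ij.1)
      have h2 := hk ij.1 ij.2
      have h3 : 0 ≤ ‖y‖ ^ (d - 1) := by positivity
      have h4 : ‖y‖ ≤ 1 + ‖y‖ ^ (d - 1) := by
        rcases le_total ‖y‖ 1 with h | h
        · linarith
        · have := le_self_pow₀ h (show d - 1 ≠ 0 by omega)
          linarith
      exact max_le (by linarith) (by linarith)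
    · obtain ⟨C, hC⟩ := poly_growth (d - 1) (f l) (by have := hdf l; omega)
      exact ⟨C, fun y _ => hC y⟩
  have hφC : ∀ y ∈ K, |φ y| ≤ C₀ * (1 + ‖y‖ ^ (d - 1)) := fun y hy => by
    rw [abs_of_nonneg (hφ y hy).1]; exact (hφ y hy).2
  have hcard : Fintype.card ((Σ i, Fin (N i)) ⊕ Fin m) + 3 ≤ n * (∑ i, N i) + m + 3 := by
    simp only [Fintype.card_sum, Fintype.card_sigma, Fintype.card_fin]
    have := Nat.le_mul_of_pos_left (∑ i, N i) hn
    omega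
  have main : ∀ (L : ℝ) (ν : ℕ → Measure (EuclideanSpace ℝ (Fin n))), (∀ t, ν t ∈ F) →
      Filter.Tendsto (fun t => ∫ x, φ x ∂(ν t)) Filter.atTop (nhds L) →
      ∃ μ ∈ F, ∫ x, φ x ∂μ = L ∧
        ∃ (J : ℕ) (ω : Fin J → ℝ) (pts : Fin J → EuclideanSpace ℝ (Fin n)),
          J ≤ n * (∑ i, N i) + m + 3 ∧ (∀ j, 0 < ω j) ∧ (∀ j i, 0 ≤ pts j i) ∧
          μ = ∑ j, ENNReal.ofReal (ω j) • Measure.dirac (pts j) := by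
    intro L ν hν hL
    subst hF
    obtain ⟨J, ω, pts, hJ, hω, hpts, hω1, hωg, hωM, hωφ⟩ := core K hKc h0 d (by omega) M g hg hgC
      φ hφc C₀ hφC b L ν (fun t => (hν t).1) (fun t => (hν t).2.1)
      (fun t c => by
        rcases c with ij | l
        · exact ((hν t).2.2.1 ij.1 ij.2).2
        · exact ((hν t).2.2.2.1 l).2)
      (fun t => (hν t).2.2.2.2.1) (fun t => (hν t).2.2.2.2.2) hL
    have hI : ∀ h : EuclideanSpace ℝ (Fin n) → ℝ,
        Integrable h (∑ j, ENNReal.ofReal (ω j) • Measure.dirac (pts j)) := by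
      intro h
      rw [integrable_finsetSum_measure]
      intro j _
      exact (integrable_dirac (by simp)).smul_measure ENNReal.ofReal_ne_top
    have hIntg : ∀ h : EuclideanSpace ℝ (Fin n) → ℝ,
        ∫ x, h x ∂(∑ j, ENNReal.ofReal (ω j) • Measure.dirac (pts j)) = ∑ j, ω j * h (pts j) := by
      intro h
      rw [integral_finsetSum_measure
        (fun j _ => (integrable_dirac (by simp)).smul_measure ENNReal.ofReal_ne_top)]
      refine Finset.sum_congr rfl fun j _ => ?_
      rw [integral_smul_measure, integral_dirac, ENNReal.toReal_ofReal (hω j).le, smul_eq_mul]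
    refine ⟨∑ j, ENNReal.ofReal (ω j) • Measure.dirac (pts j),
      ⟨⟨?_⟩, ?_, fun i j => ⟨hI _, ?_⟩, fun l => ⟨hI _, ?_⟩, hI _, ?_⟩, ?_,
      J, ω, pts, hJ.trans hcard, hω, hpts, rfl⟩
    · simp [← ENNReal.ofReal_sum_of_nonneg (fun j _ => (hω j).le), hω1]
    · simp only [Measure.coe_finsetSum, Finset.sum_apply, Measure.smul_apply, smul_eq_mul]
      refine Finset.sum_eq_zero fun j _ => ?_
      have hm : MeasurableSet {x : EuclideanSpace ℝ (Fin n) | ¬ ∀ i, 0 ≤ x i} :=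
        hKc.measurableSet.compl
      have hn : pts j ∉ {x : EuclideanSpace ℝ (Fin n) | ¬ ∀ i, 0 ≤ x i} := not_not.2 (hpts j)
      rw [Measure.dirac_apply' _ hm, Set.indicator_of_notMem hn, mul_zero]
    · rw [hIntg]; exact hωg (.inl ⟨i, j⟩)
    · rw [hIntg]; exact hωg (.inr l)
    · rw [hIntg]; exact hωM
    · rw [hIntg]; exact hωφ
  have himne : ((fun ν => ∫ x, φ x ∂ν) '' F).Nonempty := hne.image _
  have hbb : BddBelow ((fun ν => ∫ x, φ x ∂ν) '' F) := by
    refine ⟨0, ?_⟩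
    rintro _ ⟨μ, hμ, rfl⟩
    rw [hF] at hμ
    have hKμ : ∀ᵐ x ∂μ, x ∈ K := hμ.2.1
    apply integral_nonneg_of_ae
    filter_upwards [hKμ] with x hx using (hφ x hx).1
  have hba : BddAbove ((fun ν => ∫ x, φ x ∂ν) '' F) := by
    refine ⟨C₀ * (2 + M), ?_⟩
    rintro _ ⟨μ, hμ, rfl⟩
    rw [hF] at hμ
    obtain ⟨hp, hKμ', -, -, hi, hiM⟩ := hμ
    have hKμ : ∀ᵐ x ∂μ, x ∈ K := hKμ'
    have hφi := (integrable_of_growth μ K hKμ d hi φ hφc C₀ hφC).2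
    have h2 : Integrable (fun x : EuclideanSpace ℝ (Fin n) => 2 + ‖x‖ ^ d) μ :=
      (integrable_const 2).add hi
    calc ∫ x, φ x ∂μ ≤ ∫ x, C₀ * (2 + ‖x‖ ^ d) ∂μ := by
          refine integral_mono_ae hφi (h2.const_mul C₀) ?_
          filter_upwards [hKμ] with x hx
          refine (hφ x hx).2.trans (mul_le_mul_of_nonneg_left ?_ hC₀)
          rcases le_total ‖x‖ 1 with h | h
          · have := pow_le_one₀ (n := d - 1) (norm_nonneg x) h
            have : 0 ≤ ‖x‖ ^ d := by positivity
            linarith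
          · have := pow_le_pow_right₀ h (Nat.sub_le d 1)
            linarith
      _ = C₀ * (2 + ∫ x, ‖x‖ ^ d ∂μ) := by
          rw [integral_const_mul, integral_add (integrable_const 2) hi]; simp
      _ ≤ C₀ * (2 + M) := by gcongr
  constructor
  · obtain ⟨u, -, hu, hmem⟩ := exists_seq_tendsto_sInf himne hbb
    choose ν hν hνu using hmem
    exact main _ ν hν (by simpa only [hνu] using hu)
  · obtain ⟨u, -, hu, hmem⟩ := exists_seq_tendsto_sSup himne hba
    choose ν hν hνu using hmem
    exact main _ ν hν (by simpa only [hνu] using hu)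
end
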